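/- There exists a linear code over the field with 11 elements of length 110, dimension 87, minimum distance exactly 3, and locality 4; its parameters attain the Singleton-type bound d ≤ n − k − ⌈k/r⌉ + 2 for codes of length n, dimension k, minimum distance d, and locality r, and its length satisfies n = q^2 − q for q = 11. -/

import Mathlib

/-- Coordinates are arranged in 22 groups of size 5. -/
def lrcIdx : Fin 22 × Fin 5 ≃ Fin 110 := finProdFinEquiv

theorem lrcFact : Fact (Nat.Prime 11) := ⟨by norm_num⟩

/-- Parity checks: the 22 group sums, and one global weighted sum. -/
def lrcChk : (Fin 110 → ZMod 11) →ₗ[ZMod 11] ((Fin 22 → ZMod 11) × ZMod 11) where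
  toFun x := (fun g => ∑ j : Fin 5, x (lrcIdx (g, j)),
    ∑ p : Fin 22 × Fin 5, ((p.2 : ℕ) : ZMod 11) * x (lrcIdx p))
  map_add' x y := by
    ext <;> simp [Finset.sum_add_distrib, mul_add]
  map_smul' c x := by
    ext
    · simp [Finset.mul_sum]
    · simp only [Pi.smul_apply, smul_eq_mul, RingHom.id_apply, Prod.smul_snd, Finset.mul_sum]
      exact Finset.sum_congr rfl fun _ _ => by ring

theorem lrc_mem (x : Fin 110 → ZMod 11) : x ∈ LinearMap.ker lrcChk ↔
    (∀ g, ∑ j : Fin 5, x (lrcIdx (g, j)) = 0) ∧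
    ∑ p : Fin 22 × Fin 5, ((p.2 : ℕ) : ZMod 11) * x (lrcIdx p) = 0 := by
  simp [LinearMap.mem_ker, lrcChk, Prod.ext_iff, funext_iff]

theorem lrc_surj : Function.Surjective lrcChk := by
  rintro ⟨a, b⟩
  refine ⟨fun i => (if (lrcIdx.symm i).2 = 0 then
      (a (lrcIdx.symm i).1 - if (lrcIdx.symm i).1 = 0 then b else 0) else
      if (lrcIdx.symm i).2 = 1 then (if (lrcIdx.symm i).1 = 0 then b else 0) else 0), ?_⟩
  ext g
  · simp [lrcChk, Fin.sum_univ_five]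
  · simp [lrcChk, Fin.sum_univ_five, Fintype.sum_prod_type]

theorem lrc_finrank : Module.finrank (ZMod 11) (LinearMap.ker lrcChk) = 87 := by
  haveI := lrcFact
  have h := lrcChk.finrank_range_add_finrank_ker
  rw [LinearMap.range_eq_top.2 lrc_surj, finrank_top] at h
  simp at h
  omega

theorem lrc_inj : ∀ j k : Fin 5, ((j : ℕ) : ZMod 11) = ((k : ℕ) : ZMod 11) → j = k := by
  decide

theorem lrc_dist (x : Fin 110 → ZMod 11) (hx : x ∈ LinearMap.ker lrcChk) (h0 : x ≠ 0) :
    3 ≤ Nat.card {i : Fin 110 // x i ≠ 0} := by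
  haveI := lrcFact
  obtain ⟨h1, h2⟩ := (lrc_mem x).1 hx
  obtain ⟨i, hi⟩ := Function.ne_iff.1 h0
  obtain ⟨⟨g, j⟩, rfl⟩ := lrcIdx.surjective i
  simp only [Pi.zero_apply] at hi
  have hk : ∃ k, k ≠ j ∧ x (lrcIdx (g, k)) ≠ 0 := by
    by_contra! hc
    have := h1 g
    rw [Finset.sum_eq_single j (fun k _ hk => hc k hk) (by simp)] at this
    exact hi this
  obtain ⟨k, hkj, hk⟩ := hk
  by_contra! hlt
  rw [Nat.card_eq_fintype_card, Fintype.card_subtype] at hlt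
  have hz : ∀ p, p ≠ (g, j) → p ≠ (g, k) → x (lrcIdx p) = 0 := by
    intro p hp hq
    by_contra hne
    have hsub : ({lrcIdx p, lrcIdx (g, j), lrcIdx (g, k)} : Finset (Fin 110)) ⊆
        Finset.univ.filter (fun i => x i ≠ 0) := by
      intro a ha
      simp only [Finset.mem_insert, Finset.mem_singleton] at ha
      rcases ha with rfl | rfl | rfl <;> simp [*]
    have hc := Finset.card_le_card hsub
    rw [Finset.card_eq_three.2 ⟨_, _, _, by simpa using hp, by simpa using hq,
      by simpa using hkj.symm, rfl⟩] at hc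
    omega
  have e1 := h1 g
  rw [Fintype.sum_eq_add j k hkj.symm (fun m hm => hz _ (by simpa using hm.1)
    (by simpa using hm.2))] at e1
  rw [Fintype.sum_eq_add (g, j) (g, k) (by simpa using hkj.symm)
    (fun p hp => by rw [hz p hp.1 hp.2, mul_zero])] at h2
  have e3 : (((j : ℕ) : ZMod 11) - ((k : ℕ) : ZMod 11)) * x (lrcIdx (g, j)) = 0 := by
    linear_combination h2 - ((k : ℕ) : ZMod 11) * e1
  rcases mul_eq_zero.1 e3 with h | h
  · exact hkj (lrc_inj _ _ (sub_eq_zero.1 h)).symm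
  · exact hi h

/-- A codeword of weight three, supported in the first group. -/
def lrcWord : Fin 110 → ZMod 11 := fun i =>
  if i = 0 then 1 else if i = 1 then -2 else if i = 2 then 1 else 0

theorem lrc_word : lrcWord ∈ LinearMap.ker lrcChk ∧ lrcWord ≠ 0 ∧
    Nat.card {i : Fin 110 // lrcWord i ≠ 0} = 3 := by
  refine ⟨(lrc_mem _).2 ⟨by decide +kernel, by decide +kernel⟩, ?_, ?_⟩
  · intro h
    have := congrFun h 0
    revert this
    decide
  · rw [Nat.card_eq_fintype_card]
    decide +kernel

theorem lrc_local (i : Fin 110) : ∃ I : Finset (Fin 110), i ∉ I ∧ I.card ≤ 4 ∧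
    ∀ x ∈ LinearMap.ker lrcChk, ∀ y ∈ LinearMap.ker lrcChk,
      (∀ j ∈ I, x j = y j) → x i = y i := by
  obtain ⟨⟨g, j⟩, rfl⟩ := lrcIdx.surjective i
  refine ⟨(Finset.univ.erase j).image fun k => lrcIdx (g, k), by simp, ?_, ?_⟩
  · exact Finset.card_image_le.trans (by simp)
  · intro x hx y hy h
    have e1 := ((lrc_mem x).1 hx).1 g
    have e2 := ((lrc_mem y).1 hy).1 g
    rw [← Finset.add_sum_erase _ _ (Finset.mem_univ j)] at e1 e2
    have e3 : ∑ k ∈ Finset.univ.erase j, x (lrcIdx (g, k)) =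
        ∑ k ∈ Finset.univ.erase j, y (lrcIdx (g, k)) :=
      Finset.sum_congr rfl fun k hk => h _ (Finset.mem_image_of_mem _ hk)
    linear_combination e1 - e2 - e3

/-- There is a linear code over the field with 11 elements of length 110, dimension 87,
minimum distance exactly 3, and locality 4; its parameters meet the Singleton-type
bound d ≤ n - k - ⌈k/r⌉ + 2 with equality, and n = 11 ^ 2 - 11 for q = 11. -/
theorem optimal_LRC_F11_quintic_surface :
    (∃ C : Submodule (ZMod 11) (Fin 110 → ZMod 11),
      Module.finrank (ZMod 11) C = 87 ∧
      (∀ x : Fin 110 → ZMod 11, x ∈ C → x ≠ 0 →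
        3 ≤ Nat.card {i : Fin 110 // x i ≠ 0}) ∧
      (∃ x : Fin 110 → ZMod 11, x ∈ C ∧ x ≠ 0 ∧ Nat.card {i : Fin 110 // x i ≠ 0} = 3) ∧
      (∀ i : Fin 110, ∃ I : Finset (Fin 110), i ∉ I ∧ I.card ≤ 4 ∧
        ∀ x ∈ C, ∀ y ∈ C, (∀ j ∈ I, x j = y j) → x i = y i)) ∧
    (3 : ℕ) = 110 - 87 - ⌈(87 : ℚ) / 4⌉₊ + 2 ∧
    (110 : ℕ) = 11 ^ 2 - 11 := by
  refine ⟨⟨LinearMap.ker lrcChk, lrc_finrank, lrc_dist, ⟨lrcWord, lrc_word⟩, lrc_local⟩, ?_, by norm_num⟩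
  have h : ⌈(87 : ℚ) / 4⌉₊ = 22 := by
    rw [Nat.ceil_eq_iff (by norm_num)]
    norm_num
  rw [h]
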